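/- arXiv:1811.05555 — 3 statements merged into one kernel-verified Lean document; each statement's English description precedes it below -/
import Mathlib

section
/- Let d ≥ 1, let g : ℝ^d → ℝ be a bounded Lebesgue-measurable function, and let M ⊆ ℝ^d be a set with nonempty interior. If ∫_{ℝ^d} g(t) ∏_{i=1}^d φ(t_i − m_i) dt = 0 for every m = (m_1,…,m_d) ∈ M, where φ(t) = (2π)^{-1/2} exp(−t²/2) is the standard normal density, then g = 0 Lebesgue-almost everywhere on ℝ^d. -/
open MeasureTheory

/-- The standard normal density `φ(t) = (2π)^{-1/2} exp(-t²/2)`. -/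
noncomputable def stdNormalPDF (t : ℝ) : ℝ :=
  (Real.sqrt (2 * Real.pi))⁻¹ * Real.exp (-t ^ 2 / 2)

open ProbabilityTheory in
lemma ae_zero_of_laplace {d : ℕ} (f : (Fin d → ℝ) → ℝ) (hf : Measurable f)
    (hint : ∀ (L : StrongDual ℝ (Fin d → ℝ)) (s : ℝ),
      Integrable (fun t => f t * Real.exp (s * L t)))
    (hz : ∀ L : StrongDual ℝ (Fin d → ℝ), ∀ᶠ s : ℝ in nhds 0,
      ∫ t, f t * Real.exp (s * L t) = 0) :
    ∀ᵐ t, f t = 0 := by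
  have hfi : Integrable f := by simpa using hint 0 0
  have hm1 : Measurable (fun t => ENNReal.ofReal (f t)) := by fun_prop
  have hm2 : Measurable (fun t => ENNReal.ofReal (-f t)) := by fun_prop
  set μ : Measure (Fin d → ℝ) := volume.withDensity (fun t => ENNReal.ofReal (f t)) with hμ
  set ν : Measure (Fin d → ℝ) := volume.withDensity (fun t => ENNReal.ofReal (-f t)) with hν
  have : IsFiniteMeasure μ := isFiniteMeasure_withDensity_ofReal hfi.2
  have : IsFiniteMeasure ν := isFiniteMeasure_withDensity_ofReal hfi.neg.2
  have hp1 : ∀ (L : StrongDual ℝ (Fin d → ℝ)) (s : ℝ),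
      Integrable (fun t => max (f t) 0 * Real.exp (s * L t)) := by
    intro L s
    refine (hint L s).mono (by fun_prop) (Filter.Eventually.of_forall fun t => ?_)
    simp only [norm_mul, Real.norm_eq_abs]
    refine mul_le_mul_of_nonneg_right ?_ (abs_nonneg _)
    rcases max_cases (f t) 0 with h | h <;> simp [h]
  have hp2 : ∀ (L : StrongDual ℝ (Fin d → ℝ)) (s : ℝ),
      Integrable (fun t => max (-f t) 0 * Real.exp (s * L t)) := by
    intro L s
    refine (hint L s).mono (by fun_prop) (Filter.Eventually.of_forall fun t => ?_)
    simp only [norm_mul, Real.norm_eq_abs]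
    refine mul_le_mul_of_nonneg_right ?_ (abs_nonneg _)
    rcases max_cases (-f t) 0 with h | h <;> simp [h]
  have hs1 : ∀ L : StrongDual ℝ (Fin d → ℝ), integrableExpSet L μ = Set.univ := by
    intro L
    refine Set.eq_univ_of_forall fun s => ?_
    change Integrable _ μ
    rw [hμ, integrable_withDensity_iff_integrable_smul' hm1 (by simp)]
    simpa [ENNReal.toReal_ofReal'] using hp1 L s
  have hs2 : ∀ L : StrongDual ℝ (Fin d → ℝ), integrableExpSet L ν = Set.univ := by
    intro L
    refine Set.eq_univ_of_forall fun s => ?_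
    change Integrable _ ν
    rw [hν, integrable_withDensity_iff_integrable_smul' hm2 (by simp)]
    simpa [ENNReal.toReal_ofReal'] using hp2 L s
  have key : μ = ν := by
    apply Measure.ext_of_charFunDual
    ext L
    have hX : AnalyticOnNhd ℂ (complexMGF L μ) Set.univ := by
      have := analyticOnNhd_complexMGF (X := L) (μ := μ)
      simpa [hs1 L] using this
    have hY : AnalyticOnNhd ℂ (complexMGF L ν) Set.univ := by
      have := analyticOnNhd_complexMGF (X := L) (μ := ν)
      simpa [hs2 L] using this
    have hreal : ∀ᶠ s : ℝ in nhds 0, complexMGF L μ s = complexMGF L ν s := by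
      filter_upwards [hz L] with s hs
      rw [complexMGF_ofReal, complexMGF_ofReal, mgf, mgf, hμ, hν,
        integral_withDensity_eq_integral_toReal_smul hm1 (by simp),
        integral_withDensity_eq_integral_toReal_smul hm2 (by simp)]
      simp only [ENNReal.toReal_ofReal', smul_eq_mul]
      congr 1
      rw [← sub_eq_zero, ← integral_sub (hp1 L s) (hp2 L s)]
      refine Eq.trans ?_ hs
      congr 1
      ext t
      rw [← sub_mul, max_zero_sub_max_neg_zero_eq_self]
    have hfreq : ∃ᶠ z : ℂ in nhdsWithin 0 {0}ᶜ, complexMGF L μ z = complexMGF L ν z := by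
      have h1 : ∃ᶠ s : ℝ in nhdsWithin 0 {0}ᶜ, complexMGF L μ s = complexMGF L ν s :=
        (hreal.filter_mono nhdsWithin_le_nhds).frequently
      have ht : Filter.Tendsto (fun s : ℝ => (s : ℂ)) (nhdsWithin 0 {0}ᶜ)
          (nhdsWithin 0 {0}ᶜ) := by
        refine tendsto_nhdsWithin_iff.2 ⟨?_, ?_⟩
        · exact (Complex.continuous_ofReal.tendsto' 0 0 (by simp)).mono_left nhdsWithin_le_nhds
        · filter_upwards [self_mem_nhdsWithin] with s hs
          simpa using hs
      exact ht.frequently h1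
    have heq := AnalyticOnNhd.eqOn_of_preconnected_of_frequently_eq hX hY
      isPreconnected_univ (Set.mem_univ 0) hfreq (Set.mem_univ Complex.I)
    simpa [complexMGF, charFunDual_apply, mul_comm] using heq
  have h2 := (withDensity_eq_iff_of_sigmaFinite hm1.aemeasurable hm2.aemeasurable).1 key
  filter_upwards [h2] with t ht
  have h3 := congrArg ENNReal.toReal ht
  simp only [ENNReal.toReal_ofReal'] at h3
  have := max_zero_sub_max_neg_zero_eq_self (f t)
  grind

lemma stdNormalPDF_integrable (m : ℝ) : Integrable (fun t => stdNormalPDF (t - m)) := by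
  have h : Integrable stdNormalPDF := by
    have := (integrable_exp_neg_mul_sq (b := 1/2) (by norm_num)).const_mul
      (Real.sqrt (2 * Real.pi))⁻¹
    refine this.congr (Filter.Eventually.of_forall fun t => ?_)
    simp only [stdNormalPDF]
    congr 2
    ring
  exact h.comp_sub_right m

lemma stdNormalPDF_shift (t m a : ℝ) : stdNormalPDF (t - m) * Real.exp (a * t) =
    Real.exp (a * m + a ^ 2 / 2) * stdNormalPDF (t - (m + a)) := by
  simp only [stdNormalPDF]
  rw [mul_left_comm, mul_assoc, ← Real.exp_add, ← Real.exp_add]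
  congr 2
  ring

lemma stdNormalPDF_measurable : Measurable stdNormalPDF := by
  unfold stdNormalPDF
  fun_prop

/-- bounded completeness of the product Gaussian location family
on `ℝ^d`. If a bounded measurable `g : ℝ^d → ℝ` integrates to zero against every
product normal density `∏ i, φ(t i − m i)` with `m` ranging over a set with
nonempty interior, then `g = 0` Lebesgue-almost everywhere. -/
theorem gaussian_location_bounded_complete_multivariate
    {d : ℕ} (hd : 1 ≤ d)
    (g : (Fin d → ℝ) → ℝ) (hgm : Measurable g) (hgb : ∃ C : ℝ, ∀ t, |g t| ≤ C)
    (M : Set (Fin d → ℝ)) (hM : (interior M).Nonempty)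
    (hzero : ∀ m ∈ M,
      ∫ t : Fin d → ℝ, g t * ∏ i : Fin d, stdNormalPDF (t i - m i) = 0) :
    ∀ᵐ t : Fin d → ℝ ∂volume, g t = 0 := by
  obtain ⟨C, hC⟩ := hgb
  obtain ⟨m₀, hm₀⟩ := hM
  have hφ := stdNormalPDF_measurable
  have hLa : ∀ (L : StrongDual ℝ (Fin d → ℝ)) (s : ℝ) (t : Fin d → ℝ),
      (g t * ∏ i, stdNormalPDF (t i - m₀ i)) * Real.exp (s * L t) =
      (∏ i, Real.exp (s * L (Pi.single i 1) * m₀ i + (s * L (Pi.single i 1)) ^ 2 / 2)) *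
       (g t * ∏ i, stdNormalPDF (t i - (m₀ i + s * L (Pi.single i 1)))) := by
    intro L s t
    have hL : L t = ∑ i, t i * L (Pi.single i 1) := by
      conv_lhs => rw [pi_eq_sum_univ' t]
      simp [map_sum]
    rw [hL, Finset.mul_sum, Real.exp_sum, mul_assoc, ← Finset.prod_mul_distrib,
      mul_left_comm, ← Finset.prod_mul_distrib]
    congr 1
    refine Finset.prod_congr rfl fun i _ => ?_
    rw [← stdNormalPDF_shift]
    congr 2
    ring
  have hI : ∀ m : Fin d → ℝ, Integrable (fun t => g t * ∏ i, stdNormalPDF (t i - m i)) := by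
    intro m
    have h1 : Integrable (fun t : Fin d → ℝ => ∏ i, stdNormalPDF (t i - m i)) :=
      Integrable.fintype_prod (f := fun i x => stdNormalPDF (x - m i))
        (fun i => stdNormalPDF_integrable (m i))
    exact h1.bdd_mul hgm.aestronglyMeasurable (Filter.Eventually.of_forall hC)
  have := ae_zero_of_laplace (fun t => g t * ∏ i, stdNormalPDF (t i - m₀ i)) (by fun_prop)
    (fun L s => by
      simp only [hLa]
      exact (hI (fun i => m₀ i + s * L (Pi.single i 1))).const_mul _)
    (fun L => by
      have hc : Filter.Tendsto (fun s : ℝ => fun i => m₀ i + s * L (Pi.single i 1))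
          (nhds 0) (nhds m₀) := by
        refine Continuous.tendsto' (by fun_prop) _ _ (by simp)
      filter_upwards [hc (mem_interior_iff_mem_nhds.1 hm₀)] with s hs
      simp only [hLa]
      rw [integral_const_mul, hzero _ hs, mul_zero])
  filter_upwards [this] with t ht
  refine (mul_eq_zero.1 ht).resolve_right (Finset.prod_ne_zero_iff.2 fun i _ => ?_)
  unfold stdNormalPDF
  positivity
end

section
/- Let F : ℝ → ℝ be a bounded Lebesgue-measurable function and β_0, β_1 ∈ ℝ. Define η̃ : ℝ × (ℝ∖{0}) → ℝ by η̃(z_1, z_2) = ∫_ℝ F(t) φ(t/z_2 − β_0 − β_1 z_1) dt, where φ(t) = (2π)^{-1/2} exp(−t²/2) is the standard normal density. Then η̃ is continuously differentiable to all orders on ℝ × (ℝ∖{0}), its partial derivatives satisfy ∂_{z_1} η̃(z_1,z_2) = −β_1 ∫ F(t) φ'(t/z_2 − β_0 − β_1 z_1) dt and ∂_{z_2} η̃(z_1,z_2) = −z_2^{-2} ∫ F(t) t φ'(t/z_2 − β_0 − β_1 z_1) dt, and η̃ satisfies the partial differential equation ∂²_{z_1 z_1} η̃(z_1,z_2) =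 −β_1² η̃(z_1,z_2) − β_1(β_0 + β_1 z_1) ∂_{z_1} η̃(z_1,z_2) + β_1² z_2 ∂_{z_2} η̃(z_1,z_2) for all (z_1,z_2) ∈ ℝ × (ℝ∖{0}). -/
open MeasureTheory

/-- Moment integrals of `F` against a Gaussian kernel. -/
noncomputable def momH (F : ℝ → ℝ) (n : ℕ) (p : ℝ × ℝ) : ℝ :=
  ∫ t : ℝ, F t * t ^ n * Real.exp (-p.1 * t ^ 2 + p.2 * t)

lemma gauss_bound {u w u' v' : ℝ} (hu : 0 < u) (hu' : u / 2 ≤ u') (hv : |v'| ≤ w) (t : ℝ) :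
    Real.exp (-u' * t ^ 2 + v' * t) ≤ Real.exp (w ^ 2 / u) * Real.exp (-(u / 4) * t ^ 2) := by
  rw [← Real.exp_add]
  apply Real.exp_le_exp.mpr
  have h1 : v' * t ≤ w * |t| := by
    calc v' * t ≤ |v' * t| := le_abs_self _
      _ = |v'| * |t| := abs_mul _ _
      _ ≤ w * |t| := by gcongr
  have h2 : u / 2 * t ^ 2 ≤ u' * t ^ 2 := by gcongr
  have h3 : w * |t| ≤ w ^ 2 / u + u / 4 * t ^ 2 := by
    have : w ^ 2 / u + u / 4 * t ^ 2 - w * |t| = (w - u / 2 * |t|) ^ 2 / u := by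
      rw [← sq_abs t]; field_simp; ring
    have h4 : 0 ≤ (w - u / 2 * |t|) ^ 2 / u := by positivity
    linarith
  linarith

lemma int_pow (b : ℝ) (hb : 0 < b) (n : ℕ) :
    Integrable (fun t : ℝ => |t| ^ n * Real.exp (-b * t ^ 2)) := by
  have h := (integrable_rpow_mul_exp_neg_mul_sq hb (s := n)
    (by have : (0 : ℝ) ≤ n := n.cast_nonneg
        linarith)).norm
  refine h.congr (Filter.Eventually.of_forall fun t => ?_)
  simp [abs_mul]

lemma meas_int {F : ℝ → ℝ} (hFm : Measurable F) (n : ℕ) (p : ℝ × ℝ) :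
    AEStronglyMeasurable (fun t : ℝ => F t * t ^ n * Real.exp (-p.1 * t ^ 2 + p.2 * t)) volume := by
  apply Measurable.aestronglyMeasurable
  fun_prop

lemma momH_int {F : ℝ → ℝ} (hFm : Measurable F) {C : ℝ} (hC : ∀ t, |F t| ≤ C) (n : ℕ)
    (p : ℝ × ℝ) (hp : 0 < p.1) :
    Integrable (fun t : ℝ => F t * t ^ n * Real.exp (-p.1 * t ^ 2 + p.2 * t)) := by
  have hC0 : 0 ≤ C := (abs_nonneg _).trans (hC 0)
  refine Integrable.mono' (((int_pow (p.1 / 4) (by positivity) n).const_mul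
    (C * Real.exp (|p.2| ^ 2 / p.1)))) (meas_int hFm n p) (Filter.Eventually.of_forall fun t => ?_)
  have h := gauss_bound hp (by linarith : p.1 / 2 ≤ p.1) (le_refl |p.2|) t
  rw [Real.norm_eq_abs, abs_mul, abs_mul, abs_pow, Real.abs_exp]
  calc |F t| * |t| ^ n * Real.exp (-p.1 * t ^ 2 + p.2 * t)
      ≤ C * |t| ^ n * (Real.exp (|p.2| ^ 2 / p.1) * Real.exp (-(p.1 / 4) * t ^ 2)) := by
        gcongr; exact hC t
    _ = _ := by ring

lemma momH_fderiv {F : ℝ → ℝ} (hFm : Measurable F) {C : ℝ} (hC : ∀ t, |F t| ≤ C) (n : ℕ)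
    (p : ℝ × ℝ) (hp : 0 < p.1) :
    HasFDerivAt (momH F n)
      ((-momH F (n + 2) p) • ContinuousLinearMap.fst ℝ ℝ ℝ
        + momH F (n + 1) p • ContinuousLinearMap.snd ℝ ℝ ℝ) p := by
  have hC0 : 0 ≤ C := (abs_nonneg _).trans (hC 0)
  have i2 := momH_int hFm hC (n + 2) p hp
  have i1 := momH_int hFm hC (n + 1) p hp
  let F' : ℝ × ℝ → ℝ → (ℝ × ℝ →L[ℝ] ℝ) := fun q t =>
    (-(F t * t ^ (n + 2) * Real.exp (-q.1 * t ^ 2 + q.2 * t))) • ContinuousLinearMap.fst ℝ ℝ ℝ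
      + (F t * t ^ (n + 1) * Real.exp (-q.1 * t ^ 2 + q.2 * t)) • ContinuousLinearMap.snd ℝ ℝ ℝ
  have hF'int : Integrable (F' p) :=
    (i2.neg.smul_const (ContinuousLinearMap.fst ℝ ℝ ℝ)).add
      (i1.smul_const (ContinuousLinearMap.snd ℝ ℝ ℝ))
  have key := hasFDerivAt_integral_of_dominated_of_fderiv_le (μ := volume) (𝕜 := ℝ)
    (F := fun (q : ℝ × ℝ) t => F t * t ^ n * Real.exp (-q.1 * t ^ 2 + q.2 * t))
    (F' := F') (x₀ := p) (s := Metric.ball p (min (p.1 / 2) 1))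
    (bound := fun t => C * Real.exp ((|p.2| + 1) ^ 2 / p.1) *
      (|t| ^ (n + 2) * Real.exp (-(p.1 / 4) * t ^ 2) + |t| ^ (n + 1) * Real.exp (-(p.1 / 4) * t ^ 2)))
    (Metric.ball_mem_nhds p (by positivity))
    (Filter.Eventually.of_forall fun q => meas_int hFm n q)
    (momH_int hFm hC n p hp) hF'int.aestronglyMeasurable
    (Filter.Eventually.of_forall fun t q hq => ?_)
    (((int_pow (p.1 / 4) (by positivity) (n + 2)).add
      (int_pow (p.1 / 4) (by positivity) (n + 1))).const_mul _)
    (Filter.Eventually.of_forall fun t q hq => ?_)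
  · have : ∫ t, F' p t = (-momH F (n + 2) p) • ContinuousLinearMap.fst ℝ ℝ ℝ
        + momH F (n + 1) p • ContinuousLinearMap.snd ℝ ℝ ℝ := by
      have := integral_add (i2.neg.smul_const (ContinuousLinearMap.fst ℝ ℝ ℝ))
        (i1.smul_const (ContinuousLinearMap.snd ℝ ℝ ℝ))
      refine this.trans ?_
      rw [integral_smul_const, integral_smul_const]
      congr 2
      exact integral_neg _
    rw [this] at key
    exact key
  · rw [Metric.mem_ball, Prod.dist_eq, max_lt_iff, Real.dist_eq, Real.dist_eq] at hq
    have hq1 : |q.1 - p.1| < p.1 / 2 := hq.1.trans_le (min_le_left _ _)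
    have hq2 : |q.2 - p.2| < 1 := hq.2.trans_le (min_le_right _ _)
    have e1 : p.1 / 2 ≤ q.1 := by have := (abs_lt.mp hq1).1; linarith
    have e2 : |q.2| ≤ |p.2| + 1 := by
      have := abs_sub_abs_le_abs_sub q.2 p.2; linarith
    have h := gauss_bound hp e1 e2 t
    have aux : ∀ m : ℕ, |F t * t ^ m * Real.exp (-q.1 * t ^ 2 + q.2 * t)| ≤
        C * Real.exp ((|p.2| + 1) ^ 2 / p.1) * (|t| ^ m * Real.exp (-(p.1 / 4) * t ^ 2)) := by
      intro m
      rw [abs_mul, abs_mul, abs_pow, Real.abs_exp]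
      calc |F t| * |t| ^ m * Real.exp (-q.1 * t ^ 2 + q.2 * t)
          ≤ C * |t| ^ m * (Real.exp ((|p.2| + 1) ^ 2 / p.1) * Real.exp (-(p.1 / 4) * t ^ 2)) := by
            gcongr; exact hC t
        _ = _ := by ring
    refine (norm_add_le _ _).trans ?_
    rw [norm_smul, norm_smul, norm_neg, Real.norm_eq_abs, Real.norm_eq_abs, mul_add]
    have n1 := ContinuousLinearMap.norm_fst_le ℝ ℝ ℝ
    have n2 := ContinuousLinearMap.norm_snd_le ℝ ℝ ℝ
    exact add_le_add ((mul_le_of_le_one_right (abs_nonneg _) n1).trans (aux _))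
      ((mul_le_of_le_one_right (abs_nonneg _) n2).trans (aux _))
  · have h1 : HasFDerivAt (fun q : ℝ × ℝ => q.1) (ContinuousLinearMap.fst ℝ ℝ ℝ) q := hasFDerivAt_fst
    have h2 : HasFDerivAt (fun q : ℝ × ℝ => q.2) (ContinuousLinearMap.snd ℝ ℝ ℝ) q := hasFDerivAt_snd
    have h3 := (((h1.neg.mul_const (t ^ 2)).add (h2.mul_const t)).exp).const_mul (F t * t ^ n)
    refine h3.congr_fderiv ?_
    ext <;> simp [F'] <;> ring

lemma momH_contDiff {F : ℝ → ℝ} (hFm : Measurable F) {C : ℝ} (hC : ∀ t, |F t| ≤ C) (k : ℕ) :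
    ∀ n : ℕ, ContDiffOn ℝ k (momH F n) {p : ℝ × ℝ | 0 < p.1} := by
  have ho : IsOpen {p : ℝ × ℝ | 0 < p.1} := isOpen_lt continuous_const continuous_fst
  induction k with
  | zero =>
    intro n
    simp only [Nat.cast_zero, contDiffOn_zero]
    exact fun p hp => (momH_fderiv hFm hC n p hp).continuousAt.continuousWithinAt
  | succ k ih =>
    intro n
    push_cast
    rw [contDiffOn_succ_iff_fderiv_of_isOpen ho]
    refine ⟨fun p hp => (momH_fderiv hFm hC n p hp).differentiableAt.differentiableWithinAt,
      by simp, ?_⟩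
    refine ContDiffOn.congr (f := fun p => (-momH F (n + 2) p) • ContinuousLinearMap.fst ℝ ℝ ℝ
        + momH F (n + 1) p • ContinuousLinearMap.snd ℝ ℝ ℝ) ?_
        (fun p hp => (momH_fderiv hFm hC n p hp).fderiv)
    exact ((ih _).neg.smul contDiffOn_const).add ((ih _).smul contDiffOn_const)

lemma deriv_pdf (x : ℝ) : deriv stdNormalPDF x = -x * stdNormalPDF x := by
  have h : HasDerivAt stdNormalPDF ((Real.sqrt (2 * Real.pi))⁻¹ *
      (Real.exp (-x ^ 2 / 2) * (-(2 * x) / 2))) x := by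
    have h1 : HasDerivAt (fun t : ℝ => -t ^ 2 / 2) (-(2 * x) / 2) x := by
      simpa using ((hasDerivAt_pow 2 x).neg.div_const 2)
    exact (h1.exp).const_mul _
  rw [h.deriv, stdNormalPDF]; ring

lemma pdf_split (t z b : ℝ) : stdNormalPDF (t / z - b) =
    (Real.sqrt (2 * Real.pi))⁻¹ * Real.exp (-b ^ 2 / 2) *
      Real.exp (-(1 / 2 * (z⁻¹) ^ 2) * t ^ 2 + (b * z⁻¹) * t) := by
  rw [stdNormalPDF, mul_assoc, ← Real.exp_add]
  congr 2
  rw [div_eq_mul_inv]; ring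

/-- the key differential identity from the proof of Proposition 2.
With `η̃(z₁,z₂) = ∫ F(t) φ(t/z₂ − β₀ − β₁ z₁) dt`, `η̃` is smooth away from
`z₂ = 0`, its partial derivatives are given by differentiation under the integral
sign, and it satisfies the stated second-order partial differential equation. -/
theorem eta_pde
    (F : ℝ → ℝ) (hFm : Measurable F) (hFb : ∃ C : ℝ, ∀ t, |F t| ≤ C)
    (β₀ β₁ : ℝ) (η : ℝ → ℝ → ℝ)
    (hη : ∀ z₁ z₂ : ℝ, η z₁ z₂ = ∫ t : ℝ, F t * stdNormalPDF (t / z₂ - β₀ - β₁ * z₁)) :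
    ContDiffOn ℝ (⊤ : ℕ∞) (fun p : ℝ × ℝ => η p.1 p.2) {p : ℝ × ℝ | p.2 ≠ 0} ∧
    (∀ z₁ z₂ : ℝ, z₂ ≠ 0 →
      deriv (fun s => η s z₂) z₁ =
        -β₁ * ∫ t : ℝ, F t * deriv stdNormalPDF (t / z₂ - β₀ - β₁ * z₁)) ∧
    (∀ z₁ z₂ : ℝ, z₂ ≠ 0 →
      deriv (fun s => η z₁ s) z₂ =
        -(z₂ ^ 2)⁻¹ * ∫ t : ℝ, F t * t * deriv stdNormalPDF (t / z₂ - β₀ - β₁ * z₁)) ∧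
    (∀ z₁ z₂ : ℝ, z₂ ≠ 0 →
      deriv (deriv (fun s => η s z₂)) z₁ =
        -β₁ ^ 2 * η z₁ z₂ - β₁ * (β₀ + β₁ * z₁) * deriv (fun s => η s z₂) z₁
          + β₁ ^ 2 * z₂ * deriv (fun s => η z₁ s) z₂) := by
  obtain ⟨C, hC⟩ := hFb
  set c : ℝ := (Real.sqrt (2 * Real.pi))⁻¹ with hc
  have hpos : ∀ z : ℝ, z ≠ 0 → 0 < 1 / 2 * (z⁻¹) ^ 2 := fun z hz => by positivity
  have hη' : ∀ z₁ z₂ : ℝ, η z₁ z₂ = c * Real.exp (-(β₀ + β₁ * z₁) ^ 2 / 2) *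
      momH F 0 (1 / 2 * (z₂⁻¹) ^ 2, (β₀ + β₁ * z₁) * z₂⁻¹) := by
    intro z₁ z₂
    rw [hη, momH, ← integral_const_mul]
    congr 1; ext t
    rw [sub_sub, pdf_split, ← hc]; ring
  have I1 : ∀ z₁ z₂ : ℝ, z₂ ≠ 0 → ∀ m : ℕ,
      ∫ t : ℝ, F t * t ^ m * deriv stdNormalPDF (t / z₂ - β₀ - β₁ * z₁) =
      c * Real.exp (-(β₀ + β₁ * z₁) ^ 2 / 2) *
      ((β₀ + β₁ * z₁) * momH F m (1 / 2 * (z₂⁻¹) ^ 2, (β₀ + β₁ * z₁) * z₂⁻¹) -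
        z₂⁻¹ * momH F (m + 1) (1 / 2 * (z₂⁻¹) ^ 2, (β₀ + β₁ * z₁) * z₂⁻¹)) := by
    intro z₁ z₂ hz m
    have i0 := momH_int hFm hC m (1 / 2 * (z₂⁻¹) ^ 2, (β₀ + β₁ * z₁) * z₂⁻¹) (hpos _ hz)
    have i1 := momH_int hFm hC (m + 1) (1 / 2 * (z₂⁻¹) ^ 2, (β₀ + β₁ * z₁) * z₂⁻¹) (hpos _ hz)
    rw [momH, momH, ← integral_const_mul, ← integral_const_mul,
      ← integral_sub (i0.const_mul _) (i1.const_mul _), ← integral_const_mul]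
    congr 1; ext t
    rw [sub_sub, deriv_pdf, pdf_split, ← hc, div_eq_mul_inv]; ring
  have dE : ∀ z₁ : ℝ, HasDerivAt (fun s => c * Real.exp (-(β₀ + β₁ * s) ^ 2 / 2))
      (c * Real.exp (-(β₀ + β₁ * z₁) ^ 2 / 2) * (-(β₁ * (β₀ + β₁ * z₁)))) z₁ := by
    intro z₁
    have h0 : HasDerivAt (fun s : ℝ => β₀ + β₁ * s) β₁ z₁ := by
      simpa using ((hasDerivAt_id z₁).const_mul β₁).const_add β₀
    have h1 := (((h0.pow 2).neg.div_const 2).exp).const_mul c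
    refine h1.congr_deriv ?_
    simp; ring
  have d1 : ∀ z₁ z₂ : ℝ, z₂ ≠ 0 → ∀ m : ℕ, HasDerivAt
      (fun s => momH F m (1 / 2 * (z₂⁻¹) ^ 2, (β₀ + β₁ * s) * z₂⁻¹))
      (β₁ * z₂⁻¹ * momH F (m + 1) (1 / 2 * (z₂⁻¹) ^ 2, (β₀ + β₁ * z₁) * z₂⁻¹)) z₁ := by
    intro z₁ z₂ hz m
    have h0 : HasDerivAt (fun s : ℝ => (β₀ + β₁ * s) * z₂⁻¹) (β₁ * z₂⁻¹) z₁ := by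
      simpa using (((hasDerivAt_id z₁).const_mul β₁).const_add β₀).mul_const z₂⁻¹
    have h1 := (hasDerivAt_const z₁ (1 / 2 * (z₂⁻¹) ^ 2)).prodMk h0
    have h2 := (momH_fderiv hFm hC m (1 / 2 * (z₂⁻¹) ^ 2, (β₀ + β₁ * z₁) * z₂⁻¹)
      (hpos _ hz)).comp_hasDerivAt z₁ h1
    refine h2.congr_deriv ?_
    simp; ring
  have d2 : ∀ z₁ z₂ : ℝ, z₂ ≠ 0 → HasDerivAt (fun s => η z₁ s)
      (c * Real.exp (-(β₀ + β₁ * z₁) ^ 2 / 2) *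
        (z₂⁻¹ ^ 3 * momH F 2 (1 / 2 * (z₂⁻¹) ^ 2, (β₀ + β₁ * z₁) * z₂⁻¹)
          - (β₀ + β₁ * z₁) * z₂⁻¹ ^ 2 *
            momH F 1 (1 / 2 * (z₂⁻¹) ^ 2, (β₀ + β₁ * z₁) * z₂⁻¹))) z₂ := by
    intro z₁ z₂ hz
    have h0 := hasDerivAt_inv hz
    have h1 := ((h0.pow 2).const_mul (1 / 2 : ℝ)).prodMk (h0.const_mul (β₀ + β₁ * z₁))
    have h2 := ((momH_fderiv hFm hC 0 (1 / 2 * (z₂⁻¹) ^ 2, (β₀ + β₁ * z₁) * z₂⁻¹)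
      (hpos _ hz)).comp_hasDerivAt z₂ h1).const_mul (c * Real.exp (-(β₀ + β₁ * z₁) ^ 2 / 2))
    have h3 : (fun s => η z₁ s) = _ := funext fun s => hη' z₁ s
    rw [h3]
    refine h2.congr_deriv ?_
    simp only [ContinuousLinearMap.add_apply, ContinuousLinearMap.smul_apply,
      ContinuousLinearMap.coe_fst', ContinuousLinearMap.coe_snd', smul_eq_mul, ← inv_pow]
    norm_num
    ring_nf
    try simp
  have d1η : ∀ z₁ z₂ : ℝ, z₂ ≠ 0 → HasDerivAt (fun s => η s z₂)
      (c * Real.exp (-(β₀ + β₁ * z₁) ^ 2 / 2) *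
        (β₁ * z₂⁻¹ * momH F 1 (1 / 2 * (z₂⁻¹) ^ 2, (β₀ + β₁ * z₁) * z₂⁻¹)
          - β₁ * (β₀ + β₁ * z₁) *
            momH F 0 (1 / 2 * (z₂⁻¹) ^ 2, (β₀ + β₁ * z₁) * z₂⁻¹))) z₁ := by
    intro z₁ z₂ hz
    have h3 : (fun s => η s z₂) = _ := funext fun s => hη' s z₂
    rw [h3]
    refine ((dE z₁).mul (d1 z₁ z₂ hz 0)).congr_deriv ?_
    ring
  refine ⟨?_, ?_, ?_, ?_⟩
  · have h3 : (fun p : ℝ × ℝ => η p.1 p.2) = _ := funext fun p => hη' p.1 p.2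
    rw [h3]
    have hH : ContDiffOn ℝ (⊤ : ℕ∞) (momH F 0) {p : ℝ × ℝ | 0 < p.1} :=
      contDiffOn_infty.mpr fun k => momH_contDiff hFm hC k 0
    have hinv : ContDiffOn ℝ (⊤ : ℕ∞) (fun p : ℝ × ℝ => p.2⁻¹) {p : ℝ × ℝ | p.2 ≠ 0} :=
      contDiff_snd.contDiffOn.inv fun p hp => hp
    have hb : ContDiff ℝ (⊤ : ℕ∞) (fun p : ℝ × ℝ => β₀ + β₁ * p.1) := by fun_prop
    have hE : ContDiff ℝ (⊤ : ℕ∞)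
      (fun p : ℝ × ℝ => c * Real.exp (-(β₀ + β₁ * p.1) ^ 2 / 2)) := by fun_prop
    refine hE.contDiffOn.mul ?_
    exact hH.comp ((contDiffOn_const.mul (hinv.pow 2)).prodMk (hb.contDiffOn.mul hinv))
      (fun p hp => hpos _ hp)
  · intro z₁ z₂ hz
    have := I1 z₁ z₂ hz 0
    simp only [pow_zero, mul_one] at this
    rw [(d1η z₁ z₂ hz).deriv, this]; ring
  · intro z₁ z₂ hz
    have := I1 z₁ z₂ hz 1
    simp only [pow_one] at this
    rw [(d2 z₁ z₂ hz).deriv, this, ← inv_pow]; ring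
  · intro z₁ z₂ hz
    have hd : deriv (fun s => η s z₂) = _ := funext fun s => (d1η s z₂ hz).deriv
    have h0 : HasDerivAt (fun s : ℝ => β₁ * (β₀ + β₁ * s)) (β₁ * β₁) z₁ := by
      simpa using (((hasDerivAt_id z₁).const_mul β₁).const_add β₀).const_mul β₁
    have h2 := (dE z₁).mul (((d1 z₁ z₂ hz 1).const_mul (β₁ * z₂⁻¹)).sub
      (h0.mul (d1 z₁ z₂ hz 0)))
    rw [(d1η z₁ z₂ hz).deriv, (d2 z₁ z₂ hz).deriv, hη' z₁ z₂, hd]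
    refine h2.deriv.trans ?_
    simp only [Pi.mul_apply, Pi.sub_apply]
    have hzz : z₂ * z₂⁻¹ = 1 := mul_inv_cancel₀ hz
    generalize z₂⁻¹ = y at *
    simp only [Nat.reduceAdd]
    generalize momH F 0 _ = A
    generalize momH F 1 _ = B
    generalize momH F 2 _ = D
    generalize c * Real.exp _ = E
    linear_combination (-E * β₁ ^ 2 * (y ^ 2 * D - (β₀ + β₁ * z₁) * y * B)) * hzz
end

section
/- Let F, G : ℝ → ℝ be bounded Lebesgue-measurable functions and β_0, β_1, γ_0, γ_1 ∈ ℝ with β_1 > 0 and γ_1 > 0 (sign normalization). Let U ⊆ ℝ × (ℝ∖{0}) be a nonempty open set such that for all (z_1, z_2) ∈ U: (1/z_2) ∫_ℝ F(t) φ(t/z_2 − β_0 − β_1 z_1) dt = (1/z_2) ∫_ℝ G(t) φ(t/z_2 − γ_0 − γ_1 z_1) dt, where φ is the standard normal density. Suppose moreover there exists z_2* ≠ 0 and a nonempty open interval I with I × {z_2*} ⊆ U such that the map z_1 ↦ ∫ F(t) φ(t/z_2* − β_0 − β_1 z_1) dt restricted to I is neither an affine function z_1 ↦ K_4 z_1 +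 K_3 nor an exponential-affine function z_1 ↦ K_1 e^{K_2 z_1} + K_3 for any constants K_1, K_2, K_3, K_4. Then β_0 = γ_0, β_1 = γ_1, and F = G Lebesgue-almost everywhere. -/
open MeasureTheory

lemma sid_gauss_lin_int {c : ℝ} (hc : 0 < c) (K A B : ℝ) :
    Integrable (fun t : ℝ => K * Real.exp (-c * t ^ 2) * (|t| * A + B)) := by
  have h1 := (integrable_mul_exp_neg_mul_sq hc).norm
  have h2 := integrable_exp_neg_mul_sq hc
  refine ((h1.const_mul (K * A)).add (h2.const_mul (K * B))).congr ?_
  refine Filter.Eventually.of_forall fun t => ?_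
  simp only [Pi.add_apply, norm_mul, Real.norm_eq_abs, Real.abs_exp]
  ring

lemma sid_exp_bound (w t r b r0 B : ℝ) (hw : w = t * r - b) (hr : |r0| / 2 ≤ |r|)
    (hb : |b| ≤ B) :
    Real.exp (-w ^ 2 / 4) ≤ Real.exp (B ^ 2 / 4) * Real.exp (-(r0 ^ 2 / 32) * t ^ 2) := by
  rw [← Real.exp_add]
  apply Real.exp_le_exp.2
  have h1 : r0 ^ 2 / 4 ≤ r ^ 2 := by
    have := abs_nonneg r0
    rw [← sq_abs r0, ← sq_abs r]; nlinarith
  have h2 : b ^ 2 ≤ B ^ 2 := by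
    have := abs_nonneg b
    rw [← sq_abs b]; nlinarith
  have h3 : r0 ^ 2 / 4 * t ^ 2 ≤ r ^ 2 * t ^ 2 := mul_le_mul_of_nonneg_right h1 (sq_nonneg t)
  subst hw
  nlinarith [sq_nonneg (t * r - 2 * b)]

lemma sid_deriv (F : ℝ → ℝ) (hF : Measurable F) (CF : ℝ) (hFb : ∀ t, |F t| ≤ CF)
    (g g' : ℝ → ℝ) (hg : ∀ w, HasDerivAt g (g' w) w) (hg'm : Continuous g') (C : ℝ)
    (hgb : ∀ w, |g w| ≤ C * Real.exp (-w ^ 2 / 4))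
    (hgb' : ∀ w, |g' w| ≤ C * Real.exp (-w ^ 2 / 4))
    (r₀ d b₀ e z₀ : ℝ) (hr : r₀ + z₀ * d ≠ 0) :
    Integrable (fun t => F t * g (t * (r₀ + z₀ * d) - (b₀ + z₀ * e))) ∧
    Integrable (fun t => F t * (g' (t * (r₀ + z₀ * d) - (b₀ + z₀ * e)) * (t * d - e))) ∧
    HasDerivAt (fun z => ∫ t, F t * g (t * (r₀ + z * d) - (b₀ + z * e)))
      (∫ t, F t * (g' (t * (r₀ + z₀ * d) - (b₀ + z₀ * e)) * (t * d - e))) z₀ := by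
  have hgc : Continuous g := continuous_iff_continuousAt.2 fun w => (hg w).continuousAt
  have hCF : 0 ≤ CF := (abs_nonneg _).trans (hFb 0)
  have hC : 0 ≤ C := by
    have := (abs_nonneg _).trans (hgb 0)
    simpa using this
  set R := r₀ + z₀ * d with hR
  set B := |b₀ + z₀ * e| + 1 with hB
  have hc : 0 < R ^ 2 / 32 := by positivity
  have hmeas : ∀ z, AEStronglyMeasurable (fun t => F t * g (t * (r₀ + z * d) - (b₀ + z * e)))
      (volume : Measure ℝ) := fun z =>
    (hF.mul (hgc.measurable.comp (by fun_prop))).aestronglyMeasurable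
  have hint : Integrable (fun t => F t * g (t * (r₀ + z₀ * d) - (b₀ + z₀ * e))) := by
    refine (sid_gauss_lin_int hc (CF * C * Real.exp (B ^ 2 / 4)) 0 1).mono' (hmeas z₀) ?_
    refine Filter.Eventually.of_forall fun t => ?_
    rw [Real.norm_eq_abs, abs_mul]
    have h1 := sid_exp_bound _ t R (b₀ + z₀ * e) R B rfl (by linarith [abs_nonneg R])
      (by linarith)
    calc |F t| * |g (t * R - (b₀ + z₀ * e))|
        ≤ CF * (C * (Real.exp (B ^ 2 / 4) * Real.exp (-(R ^ 2 / 32) * t ^ 2))) := by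
          gcongr
          · exact hFb t
          · exact (hgb _).trans (by gcongr)
      _ = _ := by ring
  have key := hasDerivAt_integral_of_dominated_loc_of_deriv_le (μ := (volume : Measure ℝ))
    (F := fun z t => F t * g (t * (r₀ + z * d) - (b₀ + z * e)))
    (F' := fun z t => F t * (g' (t * (r₀ + z * d) - (b₀ + z * e)) * (t * d - e)))
    (x₀ := z₀)
    (s := {z | |R| / 2 < |r₀ + z * d|} ∩ {z | |b₀ + z * e| < B})
    (bound := fun t => CF * C * Real.exp (B ^ 2 / 4) * Real.exp (-(R ^ 2 / 32) * t ^ 2) *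
      (|t| * |d| + |e|)) ?_ ?_ ?_ ?_ ?_ ?_ ?_
  · exact ⟨hint, key.1, key.2⟩
  · apply Filter.inter_mem
    · refine (isOpen_lt (by fun_prop) (by fun_prop)).mem_nhds ?_
      have := abs_pos.2 hr
      show |R| / 2 < |R|
      linarith
    · refine (isOpen_lt (by fun_prop) (by fun_prop)).mem_nhds ?_
      show |b₀ + z₀ * e| < B
      linarith
  · exact Filter.Eventually.of_forall hmeas
  · exact hint
  · exact (hF.mul ((hg'm.measurable.comp (by fun_prop)).mul (by fun_prop))).aestronglyMeasurable
  · refine Filter.Eventually.of_forall fun t z hz => ?_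
    rw [Real.norm_eq_abs, abs_mul, abs_mul]
    have h1 := sid_exp_bound _ t (r₀ + z * d) (b₀ + z * e) R B rfl (le_of_lt hz.1)
      (le_of_lt hz.2)
    have h2 : |t * d - e| ≤ |t| * |d| + |e| := by
      rw [← abs_mul]; exact abs_sub _ _
    calc |F t| * (|g' (t * (r₀ + z * d) - (b₀ + z * e))| * |t * d - e|)
        ≤ CF * ((C * (Real.exp (B ^ 2 / 4) * Real.exp (-(R ^ 2 / 32) * t ^ 2))) *
            (|t| * |d| + |e|)) := by
          gcongr
          · exact hFb t
          · exact (hgb' _).trans (by gcongr)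
      _ = _ := by ring
  · exact sid_gauss_lin_int hc _ _ _
  · refine Filter.Eventually.of_forall fun t z _ => ?_
    have h1 : HasDerivAt (fun z => t * (r₀ + z * d) - (b₀ + z * e)) (t * d - e) z := by
      have h := ((((hasDerivAt_id z).mul_const d).const_add r₀).const_mul t).sub
        (((hasDerivAt_id z).mul_const e).const_add b₀)
      exact h.congr_deriv (by simp)
    exact ((hg _).comp z h1).const_mul (F t)

lemma sid_gb (w : ℝ) : (1 + w ^ 2) * Real.exp (-w ^ 2 / 2) ≤ 5 * Real.exp (-w ^ 2 / 4) := by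
  have h : Real.exp (-w ^ 2 / 2) = Real.exp (-w ^ 2 / 4) * Real.exp (-w ^ 2 / 4) := by
    rw [← Real.exp_add]; ring_nf
  have h2 : (1 + w ^ 2) * Real.exp (-w ^ 2 / 4) ≤ 5 := by
    have h3 := Real.add_one_le_exp (w ^ 2 / 4)
    have h4 : Real.exp (w ^ 2 / 4) * Real.exp (-w ^ 2 / 4) = 1 := by
      rw [← Real.exp_add]; ring_nf; simp
    have := Real.exp_pos (-w ^ 2 / 4)
    nlinarith [sq_nonneg w, mul_le_mul_of_nonneg_right h3 this.le]
  rw [h]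
  have := Real.exp_pos (-w ^ 2 / 4)
  nlinarith

lemma sid_pde (F : ℝ → ℝ) (hF : Measurable F) (hFb : ∃ C : ℝ, ∀ t, |F t| ≤ C)
    (β₀ β₁ r : ℝ) (hβ : β₁ ≠ 0) (hr : r ≠ 0) :
    ∃ P1 P11 D : ℝ → ℝ, ∀ z,
      HasDerivAt (fun z => ∫ t, F t * Real.exp (-(t * r - (β₀ + β₁ * z)) ^ 2 / 2)) (P1 z) z ∧
      HasDerivAt P1 (P11 z) z ∧
      HasDerivAt (fun r => ∫ t, F t * Real.exp (-(t * r - (β₀ + β₁ * z)) ^ 2 / 2)) (D z) r ∧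
      -(r * D z) = P11 z * (1 / β₁) ^ 2 +
        (∫ t, F t * Real.exp (-(t * r - (β₀ + β₁ * z)) ^ 2 / 2)) + (β₀ / β₁ + z) * P1 z := by
  obtain ⟨CF, hFb⟩ := hFb
  have e0 : ∀ w : ℝ, HasDerivAt (fun w => Real.exp (-w ^ 2 / 2)) (-(w * Real.exp (-w ^ 2 / 2))) w := by
    intro w
    have h : HasDerivAt (fun w : ℝ => -w ^ 2 / 2) (-w) w := by
      have := ((hasDerivAt_pow 2 w).neg).div_const 2
      exact this.congr_deriv (by simp; ring)
    exact h.exp.congr_deriv (by ring)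
  have e1 : ∀ w : ℝ, HasDerivAt (fun w => -(w * Real.exp (-w ^ 2 / 2)))
      ((w ^ 2 - 1) * Real.exp (-w ^ 2 / 2)) w := by
    intro w
    exact ((hasDerivAt_id w).mul (e0 w)).neg.congr_deriv (by simp; ring)
  have b0 : ∀ w : ℝ, |Real.exp (-w ^ 2 / 2)| ≤ 5 * Real.exp (-w ^ 2 / 4) := by
    intro w
    rw [Real.abs_exp]
    refine le_trans ?_ (sid_gb w)
    have := Real.exp_pos (-w ^ 2 / 2)
    nlinarith [sq_nonneg w]
  have b1 : ∀ w : ℝ, |-(w * Real.exp (-w ^ 2 / 2))| ≤ 5 * Real.exp (-w ^ 2 / 4) := by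
    intro w
    rw [abs_neg, abs_mul, Real.abs_exp]
    refine le_trans ?_ (sid_gb w)
    gcongr
    rw [← sq_abs]; nlinarith [sq_nonneg (|w| - 1), abs_nonneg w]
  have b2 : ∀ w : ℝ, |(w ^ 2 - 1) * Real.exp (-w ^ 2 / 2)| ≤ 5 * Real.exp (-w ^ 2 / 4) := by
    intro w
    rw [abs_mul, Real.abs_exp]
    refine le_trans ?_ (sid_gb w)
    gcongr
    rw [abs_le]; constructor <;> nlinarith [sq_nonneg w]
  have A := fun z => sid_deriv F hF CF hFb _ _ e0 (by fun_prop) 5 b0 b1 r 0 β₀ β₁ z (by simpa)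
  have A2 := fun z => sid_deriv F hF CF hFb _ _ e1 (by fun_prop) 5 b1 b2 r 0 β₀ β₁ z (by simpa)
  have A3 := fun z => sid_deriv F hF CF hFb _ _ e0 (by fun_prop) 5 b0 b1 0 1 (β₀ + β₁ * z) 0 r
    (by simpa)
  simp only [mul_zero, add_zero, zero_sub, mul_comm _ β₁] at A A2
  simp only [mul_zero, add_zero, zero_add, mul_one, sub_zero] at A3
  refine ⟨_, fun z => -β₁ * ∫ t, F t * (((t * r - (β₀ + β₁ * z)) ^ 2 - 1) *
      Real.exp (-(t * r - (β₀ + β₁ * z)) ^ 2 / 2) * -β₁), _, fun z => ⟨(A z).2.2, ?_,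
    (A3 z).2.2, ?_⟩⟩
  · have h := (A2 z).2.2.const_mul (-β₁)
    refine h.congr_of_eventuallyEq (Filter.Eventually.of_forall fun z => ?_)
    simp only []
    rw [← integral_const_mul]
    congr 1; ext t; ring
  · have i1 := (A z).1
    have i2 := (A z).2.1
    have i3 := (A2 z).2.1
    simp only []
    rw [← integral_const_mul, ← integral_const_mul, ← integral_const_mul, ← integral_neg,
      ← integral_mul_const, ← integral_add, ← integral_add]
    · congr 1; ext t; field_simp; ring
    · exact ((i3.const_mul _).mul_const _).add i1
    · exact i2.const_mul _
    · exact (i3.const_mul _).mul_const _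
    · exact i1

lemma sid_ode (a b : ℝ) (hab : a < b) (p p1 p11 : ℝ → ℝ) (A B : ℝ)
    (h1 : ∀ z ∈ Set.Ioo a b, HasDerivAt p (p1 z) z)
    (h2 : ∀ z ∈ Set.Ioo a b, HasDerivAt p1 (p11 z) z)
    (h : ∀ z ∈ Set.Ioo a b, A * p11 z + B * p1 z = 0) (hAB : A ≠ 0 ∨ B ≠ 0) :
    (∃ K4 K3 : ℝ, ∀ z ∈ Set.Ioo a b, p z = K4 * z + K3) ∨
    (∃ K1 K2 K3 : ℝ, ∀ z ∈ Set.Ioo a b, p z = K1 * Real.exp (K2 * z) + K3) := by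
  have cst : ∀ f : ℝ → ℝ, (∀ z ∈ Set.Ioo a b, HasDerivAt f 0 z) →
      ∃ K, ∀ z ∈ Set.Ioo a b, f z = K := by
    intro f hf
    exact isOpen_Ioo.exists_is_const_of_deriv_eq_zero isPreconnected_Ioo
      (fun z hz => (hf z hz).differentiableAt.differentiableWithinAt)
      (fun z hz => (hf z hz).deriv)
  by_cases hA : A = 0
  · have hB : B ≠ 0 := by tauto
    left
    obtain ⟨K, hK⟩ := cst p fun z hz => by
      have := h z hz
      have h0 : p1 z = 0 := by simpa [hA, hB] using this
      rw [← h0]; exact h1 z hz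
    exact ⟨0, K, fun z hz => by simp [hK z hz]⟩
  · have hk : ∀ z ∈ Set.Ioo a b, p11 z = (-B / A) * p1 z := by
      intro z hz
      have := h z hz
      field_simp; linarith
    set k := -B / A
    have ek : ∀ z c : ℝ, HasDerivAt (fun z => Real.exp (c * z)) (Real.exp (c * z) * c) z := by
      intro z c
      simpa using ((hasDerivAt_id z).const_mul c).exp
    obtain ⟨K, hK⟩ := cst (fun z => p1 z * Real.exp (-k * z)) fun z hz => by
      refine ((h2 z hz).mul (ek z (-k))).congr_deriv ?_
      rw [hk z hz]; ring
    have hp1 : ∀ z ∈ Set.Ioo a b, p1 z = K * Real.exp (k * z) := by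
      intro z hz
      rw [← hK z hz, mul_assoc, ← Real.exp_add]; simp
    by_cases hk0 : k = 0
    · left
      obtain ⟨K3, hK3⟩ := cst (fun z => p z - K * z) fun z hz => by
        refine ((h1 z hz).sub ((hasDerivAt_id z).const_mul K)).congr_deriv ?_
        rw [hp1 z hz]; simp [hk0]
      exact ⟨K, K3, fun z hz => by linarith [hK3 z hz]⟩
    · right
      obtain ⟨K3, hK3⟩ := cst (fun z => p z - K / k * Real.exp (k * z)) fun z hz => by
        refine ((h1 z hz).sub ((ek z k).const_mul (K / k))).congr_deriv ?_
        rw [hp1 z hz]; field_simp; simp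
      exact ⟨K / k, k, K3, fun z hz => by linarith [hK3 z hz]⟩

lemma sid_gint (f : ℝ → ℝ) (hf : Measurable f) (C : ℝ) (hfb : ∀ t, |f t| ≤ C)
    (r x : ℝ) (hr : r ≠ 0) :
    Integrable (fun t => f t * Real.exp (-(t * r) ^ 2 / 2) * Real.exp (x * t)) := by
  have hC : 0 ≤ C := (abs_nonneg _).trans (hfb 0)
  have hc : 0 < r ^ 2 / 4 := by positivity
  refine (sid_gauss_lin_int hc (C * Real.exp (x ^ 2 / r ^ 2)) 0 1).mono'
    (by fun_prop) (Filter.Eventually.of_forall fun t => ?_)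
  rw [mul_assoc, ← Real.exp_add, Real.norm_eq_abs, abs_mul, Real.abs_exp, mul_zero, zero_add,
    mul_one, mul_assoc, ← Real.exp_add]
  refine mul_le_mul (hfb t) (Real.exp_le_exp.2 ?_) (Real.exp_pos _).le hC
  · have h : x = (x / r) * r := by field_simp
    rw [← div_pow]
    generalize x / r = y at *
    subst h
    nlinarith [sq_nonneg (t * r / 2 - y)]

lemma sid_unique (f g : ℝ → ℝ) (hf : Measurable f) (hg : Measurable g) (C : ℝ)
    (hfb : ∀ t, |f t| ≤ C) (hgb : ∀ t, |g t| ≤ C) (hf0 : ∀ t, 0 ≤ f t) (hg0 : ∀ t, 0 ≤ g t)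
    (r x₀ : ℝ) (hr : r ≠ 0)
    (h : ∀ᶠ x in nhds x₀, ∫ t, f t * Real.exp (-(t * r) ^ 2 / 2) * Real.exp (x * t) =
      ∫ t, g t * Real.exp (-(t * r) ^ 2 / 2) * Real.exp (x * t)) : f =ᵐ[volume] g := by
  classical
  let μ : (ℝ → ℝ) → Measure ℝ := fun f =>
    volume.withDensity fun t => ENNReal.ofReal (f t * Real.exp (-(t * r) ^ 2 / 2))
  have hmeas : ∀ f : ℝ → ℝ, Measurable f →
      Measurable fun t => ENNReal.ofReal (f t * Real.exp (-(t * r) ^ 2 / 2)) := by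
    intro f hf; fun_prop
  have hfin : ∀ f : ℝ → ℝ, Measurable f → (∀ t, |f t| ≤ C) → IsFiniteMeasure (μ f) := by
    intro f hf hfb
    apply isFiniteMeasure_withDensity_ofReal
    have := sid_gint f hf C hfb r 0 hr
    simp only [zero_mul, Real.exp_zero, mul_one] at this
    exact this.2
  have hset : ∀ f : ℝ → ℝ, Measurable f → (∀ t, |f t| ≤ C) → (∀ t, 0 ≤ f t) →
      ProbabilityTheory.integrableExpSet id (μ f) = Set.univ := by
    intro f hf hfb hf0
    ext x
    simp only [ProbabilityTheory.integrableExpSet, Set.mem_ofPred_eq, Set.mem_univ, iff_true, id]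
    rw [integrable_withDensity_iff_integrable_smul' (hmeas f hf) (by simp)]
    refine (sid_gint f hf C hfb r x hr).congr (Filter.Eventually.of_forall fun t => ?_)
    simp only [smul_eq_mul]
    rw [ENNReal.toReal_ofReal (mul_nonneg (hf0 t) (Real.exp_pos _).le)]
  have hmgf : ∀ f : ℝ → ℝ, Measurable f → (∀ t, 0 ≤ f t) → ∀ x,
      ProbabilityTheory.mgf id (μ f) x =
        ∫ t, f t * Real.exp (-(t * r) ^ 2 / 2) * Real.exp (x * t) := by
    intro f hf hf0 x
    simp only [ProbabilityTheory.mgf, id]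
    rw [integral_withDensity_eq_integral_toReal_smul (hmeas f hf) (by simp)]
    congr 1; ext t
    rw [ENNReal.toReal_ofReal (mul_nonneg (hf0 t) (Real.exp_pos _).le), smul_eq_mul]
  have := hfin f hf hfb
  have := hfin g hg hgb
  have sf := hset f hf hfb hf0
  have sg := hset g hg hgb hg0
  have af := ProbabilityTheory.analyticOnNhd_mgf (X := id) (μ := μ f)
  have ag := ProbabilityTheory.analyticOnNhd_mgf (X := id) (μ := μ g)
  rw [sf, interior_univ] at af
  rw [sg, interior_univ] at ag
  have hm : ProbabilityTheory.mgf id (μ f) = ProbabilityTheory.mgf id (μ g) := by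
    apply af.eq_of_eventuallyEq ag (z₀ := x₀)
    filter_upwards [h] with x hx
    rw [hmgf f hf hf0, hmgf g hg hg0, hx]
  have h0 : μ f = 0 ↔ μ g = 0 := by
    have := congrFun hm 0
    simp only [ProbabilityTheory.mgf_zero'] at this
    rw [← Measure.measure_univ_eq_zero, ← Measure.measure_univ_eq_zero, ← measureReal_eq_zero_iff,
      ← measureReal_eq_zero_iff, this]
  have hc := ProbabilityTheory.eqOn_complexMGF_of_mgf' hm h0
  rw [sf, interior_univ] at hc
  have hμ : μ f = μ g := Measure.ext_of_complexMGF_id_eq (funext fun z => hc (by simp))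
  have hd := (withDensity_eq_iff_of_sigmaFinite (hmeas f hf).aemeasurable
    (hmeas g hg).aemeasurable).1 hμ
  filter_upwards [hd] with t ht
  have e := Real.exp_pos (-(t * r) ^ 2 / 2)
  rw [ENNReal.ofReal_eq_ofReal_iff (mul_nonneg (hf0 t) e.le) (mul_nonneg (hg0 t) e.le)] at ht
  exact mul_right_cancel₀ e.ne' ht

lemma sid_expand (f : ℝ → ℝ) (r b : ℝ) :
    ∫ t, f t * Real.exp (-(t * r) ^ 2 / 2) * Real.exp (r * b * t) =
      Real.exp (b ^ 2 / 2) * ∫ t, f t * Real.exp (-(t * r - b) ^ 2 / 2) := by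
  rw [← integral_const_mul]
  congr 1; ext t
  rw [mul_assoc, mul_left_comm (Real.exp (b ^ 2 / 2)), ← Real.exp_add, ← Real.exp_add]
  ring_nf

lemma sid_unique' (F G : ℝ → ℝ) (hF : Measurable F) (hG : Measurable G)
    (hFb : ∃ C : ℝ, ∀ t, |F t| ≤ C) (hGb : ∃ C : ℝ, ∀ t, |G t| ≤ C)
    (r b₀ : ℝ) (hr : r ≠ 0)
    (h : ∀ᶠ b in nhds b₀, ∫ t, F t * Real.exp (-(t * r - b) ^ 2 / 2) =
      ∫ t, G t * Real.exp (-(t * r - b) ^ 2 / 2)) : F =ᵐ[volume] G := by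
  obtain ⟨C1, h1⟩ := hFb
  obtain ⟨C2, h2⟩ := hGb
  set C := max C1 C2
  have h1' : ∀ t, |F t| ≤ C := fun t => (h1 t).trans (le_max_left _ _)
  have h2' : ∀ t, |G t| ≤ C := fun t => (h2 t).trans (le_max_right _ _)
  have hC : 0 ≤ C := (abs_nonneg _).trans (h1' 0)
  have key := sid_unique (fun t => F t + C) (fun t => G t + C) (by fun_prop) (by fun_prop) (2 * C)
    (fun t => by have := abs_le.1 (h1' t); rw [abs_le]; constructor <;> linarith)
    (fun t => by have := abs_le.1 (h2' t); rw [abs_le]; constructor <;> linarith)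
    (fun t => by have := abs_le.1 (h1' t); linarith)
    (fun t => by have := abs_le.1 (h2' t); linarith) r (r * b₀) hr ?_
  · filter_upwards [key] with t ht
    simpa using ht
  · have ht : Filter.Tendsto (fun x : ℝ => x / r) (nhds (r * b₀)) (nhds b₀) := by
      have : ContinuousAt (fun x : ℝ => x / r) (r * b₀) := by fun_prop
      have h3 := this.tendsto
      simpa [mul_div_cancel_left₀ _ hr] using h3
    filter_upwards [ht.eventually h] with x hx
    have i1 := sid_gint F hF C h1' r x hr
    have i2 := sid_gint G hG C h2' r x hr
    have i3 := sid_gint (fun _ => C) measurable_const C (fun _ => (abs_of_nonneg hC).le) r x hr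
    simp only [add_mul]
    rw [integral_add i1 i3, integral_add i2 i3]
    have hxr : x = r * (x / r) := by field_simp
    have e1 := sid_expand F r (x / r)
    have e2 := sid_expand G r (x / r)
    rw [← hxr] at e1 e2
    rw [e1, e2, hx]

/-- the scalar identification theorem at the heart of
Proposition 2. If two structures `(F, β₀, β₁)` and `(G, γ₀, γ₁)` with positive
slopes generate the same choice probabilities on a nonempty open set of
covariate values, and the generated probability is (on some horizontal open
segment) neither affine nor exponential-affine in `z₁`, then the coefficients
coincide and `F = G` almost everywhere. -/
theorem scalar_identification
    (F G : ℝ → ℝ) (hFm : Measurable F) (hGm : Measurable G)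
    (hFb : ∃ C : ℝ, ∀ t, |F t| ≤ C) (hGb : ∃ C : ℝ, ∀ t, |G t| ≤ C)
    (β₀ β₁ γ₀ γ₁ : ℝ) (hβ₁ : 0 < β₁) (hγ₁ : 0 < γ₁)
    (U : Set (ℝ × ℝ)) (hUopen : IsOpen U) (hUne : U.Nonempty)
    (hU0 : ∀ p ∈ U, p.2 ≠ 0)
    (heq : ∀ p ∈ U,
      (1 / p.2) * ∫ t : ℝ, F t * stdNormalPDF (t / p.2 - β₀ - β₁ * p.1) =
        (1 / p.2) * ∫ t : ℝ, G t * stdNormalPDF (t / p.2 - γ₀ - γ₁ * p.1))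
    (hnl : ∃ z₂ : ℝ, z₂ ≠ 0 ∧ ∃ a b : ℝ, a < b ∧
      (Set.Ioo a b ×ˢ ({z₂} : Set ℝ)) ⊆ U ∧
      ¬ (∃ K₄ K₃ : ℝ, ∀ z₁ ∈ Set.Ioo a b,
          (∫ t : ℝ, F t * stdNormalPDF (t / z₂ - β₀ - β₁ * z₁)) = K₄ * z₁ + K₃) ∧
      ¬ (∃ K₁ K₂ K₃ : ℝ, ∀ z₁ ∈ Set.Ioo a b,
          (∫ t : ℝ, F t * stdNormalPDF (t / z₂ - β₀ - β₁ * z₁)) =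
            K₁ * Real.exp (K₂ * z₁) + K₃)) :
    β₀ = γ₀ ∧ β₁ = γ₁ ∧ F =ᵐ[volume] G := by
  have hpdf : ∀ (H : ℝ → ℝ) (c₀ c₁ z s : ℝ),
      ∫ t : ℝ, H t * stdNormalPDF (t / s - c₀ - c₁ * z) =
      (Real.sqrt (2 * Real.pi))⁻¹ * ∫ t, H t * Real.exp (-(t * s⁻¹ - (c₀ + c₁ * z)) ^ 2 / 2) := by
    intro H c₀ c₁ z s
    rw [← integral_const_mul]
    congr 1; ext t
    simp only [stdNormalPDF]
    rw [div_eq_mul_inv, sub_sub]; ring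
  have hk : (Real.sqrt (2 * Real.pi))⁻¹ ≠ 0 := by positivity
  have heq' : ∀ z r : ℝ, (z, r⁻¹) ∈ U →
      ∫ t, F t * Real.exp (-(t * r - (β₀ + β₁ * z)) ^ 2 / 2) =
      ∫ t, G t * Real.exp (-(t * r - (γ₀ + γ₁ * z)) ^ 2 / 2) := by
    intro z r hz
    have h := heq _ hz
    have h0 : (1 / r⁻¹ : ℝ) ≠ 0 := one_div_ne_zero (hU0 _ hz)
    simp only [hpdf, inv_inv] at h
    exact mul_left_cancel₀ hk (mul_left_cancel₀ h0 h)
  obtain ⟨s, hs, a, b, hab, hI, hna, hne⟩ := hnl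
  set r := s⁻¹ with hrs
  have hr : r ≠ 0 := inv_ne_zero hs
  have hrI : r⁻¹ = s := inv_inv s
  have hIU : ∀ z ∈ Set.Ioo a b, (z, r⁻¹) ∈ U := fun z hz => hI ⟨hz, by simp [hrI]⟩
  obtain ⟨P1, P11, D, hP⟩ := sid_pde F hFm hFb β₀ β₁ r hβ₁.ne' hr
  obtain ⟨Q1, Q11, E, hQ⟩ := sid_pde G hGm hGb γ₀ γ₁ r hγ₁.ne' hr
  have e1 : ∀ z ∈ Set.Ioo a b, P1 z = Q1 z := by
    intro z hz
    refine (hP z).1.unique ((hQ z).1.congr_of_eventuallyEq ?_)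
    filter_upwards [isOpen_Ioo.mem_nhds hz] with y hy
    exact heq' y r (hIU y hy)
  have e2 : ∀ z ∈ Set.Ioo a b, P11 z = Q11 z := by
    intro z hz
    refine (hP z).2.1.unique ((hQ z).2.1.congr_of_eventuallyEq ?_)
    filter_upwards [isOpen_Ioo.mem_nhds hz] with y hy
    exact e1 y hy
  have e3 : ∀ z ∈ Set.Ioo a b, D z = E z := by
    intro z hz
    refine (hP z).2.2.1.unique ((hQ z).2.2.1.congr_of_eventuallyEq ?_)
    have hc : ContinuousAt (fun r : ℝ => (z, r⁻¹)) r :=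
      continuousAt_const.prodMk (continuousAt_inv₀ hr)
    filter_upwards [hc.preimage_mem_nhds (hUopen.mem_nhds (hIU z hz))] with y hy
    exact heq' z y hy
  have ode : ∀ z ∈ Set.Ioo a b,
      ((1 / β₁) ^ 2 - (1 / γ₁) ^ 2) * P11 z + (β₀ / β₁ - γ₀ / γ₁) * P1 z = 0 := by
    intro z hz
    have h1 := (hP z).2.2.2
    have h2 := (hQ z).2.2.2
    rw [← e1 z hz, ← e2 z hz, ← e3 z hz, ← heq' z r (hIU z hz)] at h2
    linarith
  have hAB : (1 / β₁) ^ 2 - (1 / γ₁) ^ 2 = 0 ∧ β₀ / β₁ - γ₀ / γ₁ = 0 := by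
    by_contra hcon
    have hcon' : (1 / β₁) ^ 2 - (1 / γ₁) ^ 2 ≠ 0 ∨ β₀ / β₁ - γ₀ / γ₁ ≠ 0 := by tauto
    rcases sid_ode a b hab _ P1 P11 _ _ (fun z _ => (hP z).1) (fun z _ => (hP z).2.1) ode hcon'
      with ⟨K4, K3, h⟩ | ⟨K1, K2, K3, h⟩
    · refine hna ⟨(Real.sqrt (2 * Real.pi))⁻¹ * K4, (Real.sqrt (2 * Real.pi))⁻¹ * K3,
        fun z hz => ?_⟩
      rw [hpdf, ← hrs, h z hz]; ring
    · refine hne ⟨(Real.sqrt (2 * Real.pi))⁻¹ * K1, K2, (Real.sqrt (2 * Real.pi))⁻¹ * K3,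
        fun z hz => ?_⟩
      rw [hpdf, ← hrs, h z hz]; ring
  have hβγ : β₁ = γ₁ := by
    have h1 : (1 / β₁) ^ 2 = (1 / γ₁) ^ 2 := sub_eq_zero.1 hAB.1
    have h2 := (pow_left_inj₀ (by positivity) (by positivity) two_ne_zero).1 h1
    simpa using h2
  have hβγ0 : β₀ = γ₀ := by
    have h1 := sub_eq_zero.1 hAB.2
    rw [← hβγ] at h1
    exact (div_left_inj' hβ₁.ne').1 h1
  refine ⟨hβγ0, hβγ, ?_⟩
  subst hβγ hβγ0
  obtain ⟨z0, hz0⟩ := Set.nonempty_Ioo.2 hab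
  refine sid_unique' F G hFm hGm hFb hGb r (β₀ + β₁ * z0) hr ?_
  have ht : Filter.Tendsto (fun x : ℝ => (x - β₀) / β₁) (nhds (β₀ + β₁ * z0)) (nhds z0) := by
    have : ContinuousAt (fun x : ℝ => (x - β₀) / β₁) (β₀ + β₁ * z0) := by fun_prop
    have h3 := this.tendsto
    simpa [mul_div_cancel_left₀ _ hβ₁.ne'] using h3
  filter_upwards [ht.eventually (isOpen_Ioo.mem_nhds hz0)] with x hx
  have h := heq' _ r (hIU _ hx)
  have hx' : β₀ + β₁ * ((x - β₀) / β₁) = x := by field_simp; ring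
  rwa [hx'] at h
end
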